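/- Let μ be a non-atomic Borel probability measure on the Cantor space Ω. Then there exists a Borel measurable function g : Ω → [0,∞) that is probability bounded with respect to μ, such that for every semimeasure bound a and every real c > 0 there exists ω ∈ Ω with g(ω) > 2 and sup { a(ω|n)/μ([ω|n]) : n ∈ ℕ, μ([ω|n]) > 0 } < c · g(ω)/log g(ω). -/

import Mathlib

open MeasureTheory Filter
open scoped ENNReal

/-- The cylinder `[x]` of a finite binary string `x` in the Cantor space `ℕ → Bool`:
the set of infinite sequences extending `x`. -/
def cyl (x : List Bool) : Set (ℕ → Bool) :=
  {ω | ∀ i : ℕ, (h : i < x.length) → ω i = x.get ⟨i, h⟩}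

/-- `seg ω n` is the string formed by the first `n` bits of `ω`. -/
def seg (ω : ℕ → Bool) (n : ℕ) : List Bool :=
  List.ofFn (fun i : Fin n => ω i)

/-- A set of strings is prefix-free if no element is a proper prefix of another. -/
def PrefixFree (S : Set (List Bool)) : Prop :=
  ∀ x ∈ S, ∀ y ∈ S, x <+: y → x = y

/-- A nonnegative function on strings is a semimeasure bound if its sum over
every prefix-free set of strings is at most `1`. -/
def IsSemimeasureBound (a : List Bool → ℝ) : Prop :=
  (∀ x, 0 ≤ a x) ∧
  ∀ S : Set (List Bool), PrefixFree S → ∑' x : S, ENNReal.ofReal (a x.1) ≤ 1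

/-- `tFun μ a ω = sup { a(ω|n) / μ([ω|n]) : n ∈ ℕ, μ([ω|n]) > 0 }`. -/
noncomputable def tFun (μ : Measure (ℕ → Bool)) (a : List Bool → ℝ)
    (ω : ℕ → Bool) : ℝ≥0∞ :=
  ⨆ (n : ℕ) (_ : 0 < μ (cyl (seg ω n))),
    ENNReal.ofReal (a (seg ω n)) / μ (cyl (seg ω n))

/-!
Let `g = 2 ^ j` on disjoint events `B j` of measure about `2 ^ (-j)`, where `B j` is decided by the
first `n (j + 1)` bits and has conditional probability at most `δ j = 2 ^ (-(j + 2))` given the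
first `n j` bits. Such events exist since long cylinders have uniformly small measure.

Suppose that `tFun μ a ≥ c * g / log g` wherever `g > 2`, put `w j = (c / 4) * 2 ^ j / j` and let
`ν = ∑ j ∈ s, w j • μ.restrict (B j)` for a finite set `s` of large indices. If a cylinder `C` meets
`B k`, then only the first of the events `B j` that meet `C` can fill more than the fraction `δ j`
of `C`, and its index is at most `k`; hence `ν C ≤ (w k + ∑ j ∈ s, w j * δ j) * μ C`. The sum here
is `(c / 16) * ∑ j ∈ s, 1 / j`, which is below `w k` if the indices in `s` are large enough. So
every point of `⋃ j ∈ s, B j` lies in a cylinder `[x]` with `ν [x] ≤ a x`, and passing to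
prefix-minimal such `x` shows that `ν` has mass at most `1`. This mass is at least
`(c / 64) * ∑ j ∈ s, 1 / j`, which exceeds `1` for a suitable `s` by divergence of the harmonic
series.
-/

open Set Topology

lemma exists_subset_sum_mem_Icc {ι : Type*} (s : Finset ι) {w : ι → ℝ} {η t : ℝ} (hη : 0 ≤ η)
    (hw : ∀ i ∈ s, w i ≤ η) (ht₀ : 0 ≤ t) (ht : t ≤ ∑ i ∈ s, w i) :
    ∃ u ⊆ s, ∑ i ∈ u, w i ∈ Icc (t - η) t := by
  classical
  induction s using Finset.induction_on with
  | empty =>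
    rw [Finset.sum_empty] at ht
    exact ⟨∅, subset_rfl, by simp only [Finset.sum_empty, mem_Icc]; constructor <;> linarith⟩
  | insert a s ha ih =>
    rcases le_or_gt t (∑ i ∈ s, w i) with hts | hts
    · obtain ⟨u, hus, hu⟩ := ih (fun i hi => hw i (Finset.mem_insert_of_mem hi)) hts
      exact ⟨u, hus.trans (Finset.subset_insert a s), hu⟩
    · refine ⟨s, Finset.subset_insert a s, ?_, hts.le⟩
      rw [Finset.sum_insert ha] at ht
      linarith [hw a (Finset.mem_insert_self a s)]

section TwoPartitions

variable {Ω β γ : Type*} {mΩ : MeasurableSpace Ω} [MeasurableSpace β] [MeasurableSpace γ]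
  [MeasurableSingletonClass β] [MeasurableSingletonClass γ] {μ : Measure Ω} [IsFiniteMeasure μ]
  {X : Ω → β} {Y : Ω → γ}

lemma measureReal_inter_preimage_finset (hX : Measurable X) (A : Set Ω) (s : Finset β) :
    μ.real (A ∩ X ⁻¹' s) = ∑ b ∈ s, μ.real (A ∩ X ⁻¹' {b}) := by
  have hmeas : ∀ b, MeasurableSet (X ⁻¹' {b}) := fun b => hX (measurableSet_singleton b)
  have h := sum_measureReal_preimage_singleton (μ := μ.restrict A) s fun b _ => hmeas b
  rw [measureReal_restrict_apply (hX s.measurableSet)] at h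
  simpa only [measureReal_restrict_apply (hmeas _), inter_comm A] using h.symm

lemma exists_measureReal_inter_preimage_finset_mem_Icc [Finite β] (hX : Measurable X)
    (A : Set Ω) {η t : ℝ} (hη : 0 ≤ η) (hle : ∀ b, μ.real (A ∩ X ⁻¹' {b}) ≤ η) (ht₀ : 0 ≤ t)
    (ht : t ≤ μ.real A) :
    ∃ u : Finset β, μ.real (A ∩ X ⁻¹' u) ∈ Icc (t - η) t := by
  have := Fintype.ofFinite β
  have hsum : μ.real A = ∑ b, μ.real (A ∩ X ⁻¹' {b}) := by
    simpa using measureReal_inter_preimage_finset (μ := μ) hX A Finset.univ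
  obtain ⟨u, -, hu⟩ := exists_subset_sum_mem_Icc Finset.univ hη (fun b _ => hle b) ht₀
    (ht.trans hsum.le)
  exact ⟨u, by rwa [measureReal_inter_preimage_finset hX]⟩

lemma exists_forall_measureReal_inter_preimage_mem_Icc [Finite β] [Finite γ]
    (hX : Measurable X) (hY : Measurable Y) {δ : ℝ} (hδ₀ : 0 ≤ δ) (hδ₁ : δ ≤ 1)
    (hle : ∀ b c, μ.real (Y ⁻¹' {c} ∩ X ⁻¹' {b}) ≤ δ / 2 * μ.real (Y ⁻¹' {c})) :
    ∃ S : Set (β × γ), ∀ T : Set γ, μ.real ({ω | (X ω, Y ω) ∈ S} ∩ Y ⁻¹' T) ∈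
      Icc (δ / 2 * μ.real (Y ⁻¹' T)) (δ * μ.real (Y ⁻¹' T)) := by
  have hfibre : ∀ c, ∃ u : Finset β, μ.real (Y ⁻¹' {c} ∩ X ⁻¹' u) ∈
      Icc (δ / 2 * μ.real (Y ⁻¹' {c})) (δ * μ.real (Y ⁻¹' {c})) := fun c => by
    obtain ⟨u, hu⟩ := exists_measureReal_inter_preimage_finset_mem_Icc hX (Y ⁻¹' {c})
      (by positivity) (hle · c) (t := δ * μ.real (Y ⁻¹' {c})) (by positivity)
      (mul_le_of_le_one_left measureReal_nonneg hδ₁)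
    exact ⟨u, by linarith [hu.1], hu.2⟩
  choose u hu using hfibre
  refine ⟨{p | p.1 ∈ u p.2}, fun T => ?_⟩
  lift T to Finset γ using T.toFinite
  have hY_sum : μ.real (Y ⁻¹' T) = ∑ c ∈ T, μ.real (Y ⁻¹' {c}) := by
    simpa only [univ_inter] using measureReal_inter_preimage_finset (μ := μ) hY univ T
  have hinter : ∀ c, {ω | (X ω, Y ω) ∈ {p : β × γ | p.1 ∈ u p.2}} ∩ Y ⁻¹' {c} =
      Y ⁻¹' {c} ∩ X ⁻¹' u c := fun c => by
    ext ω
    simp +contextual [and_comm]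
  rw [measureReal_inter_preimage_finset hY, hY_sum, Finset.mul_sum, Finset.mul_sum]
  simp only [hinter]
  exact ⟨Finset.sum_le_sum fun c _ => (hu c).1, Finset.sum_le_sum fun c _ => (hu c).2⟩

end TwoPartitions

section SparseSequence

variable {Ω : Type*} {mΩ : MeasurableSpace Ω}

/-- `𝓕` is divisible for `μ` if every conditional probability `δ ∈ (0, 1]` given `𝓕 n` is attained,
up to a factor of two, by some event of a later stage of `𝓕`. -/
def IsDivisible (μ : Measure Ω) (𝓕 : Filtration ℕ mΩ) : Prop :=
  ∀ n, ∀ δ ∈ Ioc (0 : ℝ) 1, ∃ m ≥ n, ∃ A, MeasurableSet[𝓕 m] A ∧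
    ∀ D, MeasurableSet[𝓕 n] D → μ.real (A ∩ D) ∈ Icc (δ / 2 * μ.real D) (δ * μ.real D)

/-- Disjoint events `B j`, with `B j` decided at stage `n (j + 1)` of the filtration and of
conditional probability at most `δ j` given stage `n j`. -/
structure IsSparse (μ : Measure Ω) (𝓕 : Filtration ℕ mΩ) (δ : ℕ → ℝ) (n : ℕ → ℕ)
    (B : ℕ → Set Ω) : Prop where
  nonneg : ∀ j, 0 ≤ δ j
  mono : Monotone n
  measurableSet_seq : ∀ j, MeasurableSet[𝓕 (n (j + 1))] (B j)
  disjoint : Pairwise (Function.onFun Disjoint B)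
  measureReal_inter_le : ∀ j D, MeasurableSet[𝓕 (n j)] D → μ.real (B j ∩ D) ≤ δ j * μ.real D

variable {μ : Measure Ω} {𝓕 : Filtration ℕ mΩ} {δ : ℕ → ℝ} {n : ℕ → ℕ} {B : ℕ → Set Ω}

lemma IsDivisible.exists_seq (h : IsDivisible μ 𝓕) (hδ : ∀ j, δ j ∈ Ioc (0 : ℝ) 1) :
    ∃ (n : ℕ → ℕ) (A : ℕ → Set Ω), Monotone n ∧ ∀ j, MeasurableSet[𝓕 (n (j + 1))] (A j) ∧
      ∀ D, MeasurableSet[𝓕 (n j)] D →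
        μ.real (A j ∩ D) ∈ Icc (δ j / 2 * μ.real D) (δ j * μ.real D) := by
  choose next hnext A hA hAD using fun m j => h m (δ j) (hδ j)
  let n : ℕ → ℕ := fun j => Nat.rec 0 (fun j m => next m j) j
  exact ⟨n, fun j => A (n j) j, monotone_nat_of_le_succ fun j => hnext (n j) j,
    fun j => ⟨hA (n j) j, hAD (n j) j⟩⟩

lemma IsDivisible.exists_isSparse [IsProbabilityMeasure μ] (h : IsDivisible μ 𝓕)
    (hδ : ∀ j, 0 < δ j) (hsum : ∀ j, ∑ i ∈ Finset.range j, δ i ≤ 1 / 2) :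
    ∃ n B, IsSparse μ 𝓕 δ n B ∧ ∀ j, δ j / 4 ≤ μ.real (B j) := by
  have hδ_mem : ∀ j, δ j ∈ Ioc (0 : ℝ) 1 := fun j => ⟨hδ j, by
    have hle := Finset.single_le_sum (fun i _ => (hδ i).le) (Finset.self_mem_range_succ j)
    linarith [hsum (j + 1)]⟩
  obtain ⟨n, A, hn, hA⟩ := h.exists_seq hδ_mem
  have hA_le : ∀ j, μ.real (A j) ≤ δ j := fun j => by
    simpa using ((hA j).2 univ MeasurableSet.univ).2
  set U : ℕ → Set Ω := fun j => ⋃ i ∈ Finset.range j, A i with hU_def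
  have hU : ∀ j, MeasurableSet[𝓕 (n j)] (U j) := fun j =>
    Finset.measurableSet_biUnion _ fun i hi =>
      𝓕.mono (hn (Finset.mem_range.1 hi)) _ (hA i).1
  have hU_le : ∀ j, μ.real (U j) ≤ 1 / 2 := fun j =>
    (measureReal_biUnion_finset_le _ _).trans
      ((Finset.sum_le_sum fun i _ => hA_le i).trans (hsum j))
  have hB : ∀ j, disjointed A j = A j ∩ (U j)ᶜ := fun j => by
    simp [hU_def, disjointed_eq_inter_compl]
  refine ⟨n, disjointed A, ⟨fun j => (hδ j).le, hn, fun j => ?_, disjoint_disjointed A,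
    fun j D hD => ?_⟩, fun j => ?_⟩
  · rw [hB]
    exact (hA j).1.inter (𝓕.mono (hn j.le_succ) _ (hU j).compl)
  · exact (measureReal_mono (inter_subset_inter_left D (disjointed_subset A j))).trans
      ((hA j).2 D hD).2
  · rw [hB]
    have hUc : 1 / 2 ≤ μ.real (U j)ᶜ := by
      rw [probReal_compl_eq_one_sub (𝓕.le _ _ (hU j))]
      linarith [hU_le j]
    calc δ j / 4 = δ j / 2 * (1 / 2) := by ring
      _ ≤ δ j / 2 * μ.real (U j)ᶜ := by have := hδ j; gcongr
      _ ≤ μ.real (A j ∩ (U j)ᶜ) := ((hA j).2 _ (hU j).compl).1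

namespace IsSparse

lemma measurableSet (h : IsSparse μ 𝓕 δ n B) (j : ℕ) : MeasurableSet (B j) :=
  𝓕.le _ _ (h.measurableSet_seq j)

lemma measureReal_le [IsProbabilityMeasure μ] (h : IsSparse μ 𝓕 δ n B) (j : ℕ) :
    μ.real (B j) ≤ δ j := by
  simpa using h.measureReal_inter_le j univ MeasurableSet.univ

variable {l k : ℕ} {C : Set Ω}

lemma exists_le_forall_ne_measureReal_inter_le (h : IsSparse μ 𝓕 δ n B)
    (hC : MeasurableSet[𝓕 l] C) (hatom : ∀ D, MeasurableSet[𝓕 l] D → ¬ Disjoint D C → C ⊆ D)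
    (hk : ¬ Disjoint (B k) C) :
    ∃ k₀ ≤ k, ∀ j ≠ k₀, μ.real (B j ∩ C) ≤ δ j * μ.real C := by
  classical
  -- `k₀` is the first index whose event meets `C`. A later event decided no later than `C` misses
  -- `C` because `C ⊆ B k₀`; one decided afterwards has small conditional probability given `C`.
  have hmeets : ∃ j, ¬ Disjoint (B j) C := ⟨k, hk⟩
  refine ⟨Nat.find hmeets, Nat.find_min' hmeets hk, fun j hj => ?_⟩
  have of_disjoint (hjC : Disjoint (B j) C) : μ.real (B j ∩ C) ≤ δ j * μ.real C := by
    rw [hjC.inter_eq, measureReal_empty]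
    exact mul_nonneg (h.nonneg j) measureReal_nonneg
  rcases hj.lt_or_gt with hlt | hgt
  · exact of_disjoint (not_not.1 (Nat.find_min hmeets hlt))
  · rcases le_total (n j) l with hnl | hln
    · have hsub : C ⊆ B (Nat.find hmeets) :=
        hatom _ (𝓕.mono ((h.mono hgt).trans hnl) _ (h.measurableSet_seq _)) (Nat.find_spec hmeets)
      exact of_disjoint ((h.disjoint hj).mono_right hsub)
    · exact h.measureReal_inter_le j C (𝓕.mono hln _ hC)

lemma sum_mul_measureReal_inter_le [IsFiniteMeasure μ] (h : IsSparse μ 𝓕 δ n B)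
    (hC : MeasurableSet[𝓕 l] C) (hatom : ∀ D, MeasurableSet[𝓕 l] D → ¬ Disjoint D C → C ⊆ D)
    (hkC : ¬ Disjoint (B k) C) {s : Finset ℕ} {w : ℕ → ℝ} (hw₀ : ∀ j ∈ s, 0 ≤ w j)
    (hw : MonotoneOn w s) (hks : k ∈ s) :
    ∑ j ∈ s, w j * μ.real (B j ∩ C) ≤ (w k + ∑ j ∈ s, w j * δ j) * μ.real C := by
  obtain ⟨k₀, hk₀, hle⟩ := h.exists_le_forall_ne_measureReal_inter_le hC hatom hkC
  have hwk : 0 ≤ w k * μ.real C := mul_nonneg (hw₀ k hks) measureReal_nonneg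
  have hterm : ∀ j ∈ s, w j * μ.real (B j ∩ C) ≤
      (if j = k₀ then w k * μ.real C else 0) + w j * δ j * μ.real C := fun j hj => by
    have hw_nonneg := hw₀ j hj
    split_ifs with hjk
    · have hmono : w j ≤ w k := hw hj hks (hjk ▸ hk₀)
      have hδ_term : 0 ≤ w j * δ j * μ.real C :=
        mul_nonneg (mul_nonneg hw_nonneg (h.nonneg j)) measureReal_nonneg
      linarith [mul_le_mul hmono (measureReal_mono (μ := μ) (inter_subset_right (s := B j)))
        measureReal_nonneg (hw₀ k hks)]
    · rw [zero_add, mul_assoc]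
      exact mul_le_mul_of_nonneg_left (hle j hjk) hw_nonneg
  calc ∑ j ∈ s, w j * μ.real (B j ∩ C)
      ≤ ∑ j ∈ s, ((if j = k₀ then w k * μ.real C else 0) + w j * δ j * μ.real C) :=
        Finset.sum_le_sum hterm
    _ ≤ w k * μ.real C + ∑ j ∈ s, w j * δ j * μ.real C := by
        rw [Finset.sum_add_distrib, Finset.sum_ite_eq']
        gcongr
        split_ifs <;> simp [hwk]
    _ = (w k + ∑ j ∈ s, w j * δ j) * μ.real C := by rw [add_mul, Finset.sum_mul]

end IsSparse

end SparseSequence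

lemma sum_ofReal_smul_restrict_apply {Ω ι : Type*} {mΩ : MeasurableSpace Ω} (μ : Measure Ω)
    [IsFiniteMeasure μ] {s : Finset ι} {w : ι → ℝ} (hw : ∀ j ∈ s, 0 ≤ w j) (B : ι → Set Ω)
    {C : Set Ω} (hC : MeasurableSet C) :
    (∑ j ∈ s, ENNReal.ofReal (w j) • μ.restrict (B j)) C =
      ENNReal.ofReal (∑ j ∈ s, w j * μ.real (B j ∩ C)) := by
  rw [ENNReal.ofReal_sum_of_nonneg fun j hj => mul_nonneg (hw j hj) measureReal_nonneg,
    Measure.coe_finsetSum, Finset.sum_apply]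
  refine Finset.sum_congr rfl fun j hj => ?_
  rw [Measure.smul_apply, smul_eq_mul, Measure.restrict_apply hC, ENNReal.ofReal_mul (hw j hj),
    inter_comm, ofReal_measureReal]

section SequenceSpace

variable {E : ℕ → Type*}

lemma cylinder_eq_preimage_restrict (x : ∀ i, E i) (n : ℕ) :
    PiNat.cylinder x n = (Finset.range n).restrict ⁻¹' {(Finset.range n).restrict x} := by
  ext y
  simp [PiNat.cylinder, funext_iff]

lemma iInter_cylinder (x : ∀ i, E i) : ⋂ n, PiNat.cylinder x n = {x} := by
  ext y
  simp only [mem_iInter, PiNat.mem_cylinder_iff, mem_singleton_iff, funext_iff]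
  exact ⟨fun h i => h (i + 1) i i.lt_succ_self, fun h _ i _ => h i⟩

variable [∀ i, MeasurableSpace (E i)]

/-- The filtration on `Π i, E i` whose `n`-th stage is the σ-algebra of events decided by the first
`n` coordinates. -/
def prefixFiltration (E : ℕ → Type*) [∀ i, MeasurableSpace (E i)] :
    Filtration ℕ (MeasurableSpace.pi (X := E)) where
  seq n := Filtration.piFinset (Finset.range n)
  mono' _ _ h := Filtration.piFinset.mono (Finset.range_mono h)
  le' n := Filtration.piFinset.le (Finset.range n)

lemma measurableSet_prefixFiltration_iff {n : ℕ} {D : Set (∀ i, E i)} :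
    MeasurableSet[prefixFiltration E n] D ↔
      ∃ S, MeasurableSet S ∧ (Finset.range n).restrict ⁻¹' S = D :=
  Iff.rfl

lemma cylinder_subset_of_measurableSet_of_not_disjoint {x : ∀ i, E i} {n : ℕ}
    {D : Set (∀ i, E i)} (hD : MeasurableSet[prefixFiltration E n] D)
    (h : ¬ Disjoint D (PiNat.cylinder x n)) : PiNat.cylinder x n ⊆ D := by
  obtain ⟨S, -, rfl⟩ := measurableSet_prefixFiltration_iff.1 hD
  rw [cylinder_eq_preimage_restrict] at h ⊢
  obtain ⟨y, hyS, hyx⟩ := not_disjoint_iff.1 h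
  rintro z hz
  rwa [mem_preimage, mem_singleton_iff.1 hz, ← mem_singleton_iff.1 hyx]

variable [∀ i, MeasurableSingletonClass (E i)]

lemma measurableSet_prefixFiltration_cylinder (x : ∀ i, E i) (n : ℕ) :
    MeasurableSet[prefixFiltration E n] (PiNat.cylinder x n) :=
  measurableSet_prefixFiltration_iff.2
    ⟨_, measurableSet_singleton _, (cylinder_eq_preimage_restrict x n).symm⟩

lemma measurableSet_cylinder (x : ∀ i, E i) (n : ℕ) : MeasurableSet (PiNat.cylinder x n) :=
  (prefixFiltration E).le n _ (measurableSet_prefixFiltration_cylinder x n)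

variable [∀ i, Finite (E i)] (μ : Measure (∀ i, E i)) [IsFiniteMeasure μ] [NullSingletonClass μ]

lemma tendstoUniformly_measureReal_cylinder :
    TendstoUniformly (fun n x => μ.real (PiNat.cylinder x n)) 0 atTop := by
  let : ∀ i, TopologicalSpace (E i) := fun _ => ⊥
  have : ∀ i, DiscreteTopology (E i) := fun _ => ⟨rfl⟩
  have hcont (n : ℕ) : Continuous fun x => μ.real (PiNat.cylinder x n) := by
    refine IsLocallyConstant.continuous ((IsLocallyConstant.iff_exists_open _).2 fun x =>
      ⟨_, PiNat.isOpen_cylinder E x n, PiNat.self_mem_cylinder x n, fun y hy => ?_⟩)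
    rw [PiNat.mem_cylinder_iff_eq.1 hy]
  have hanti : Antitone fun n x => μ.real (PiNat.cylinder x n) := fun _ _ hmn x =>
    measureReal_mono (PiNat.cylinder_anti x hmn)
  have hpointwise (x : ∀ i, E i) : Tendsto (fun n => μ.real (PiNat.cylinder x n)) atTop (𝓝 0) := by
    have h := tendsto_measure_iInter_atTop (μ := μ)
      (fun n => (measurableSet_cylinder x n).nullMeasurableSet)
      (fun _ _ => PiNat.cylinder_anti x) ⟨0, measure_ne_top _ _⟩
    rw [iInter_cylinder, measure_singleton] at h
    exact (ENNReal.tendsto_toReal ENNReal.zero_ne_top).comp h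
  -- Dini's theorem on the compact space `Π i, E i`
  exact hanti.tendstoUniformly_of_forall_tendsto hcont continuous_const hpointwise

lemma eventually_forall_measureReal_inter_preimage_restrict_le (A : Set (∀ i, E i)) {ε : ℝ}
    (hε : 0 < ε) :
    ∀ᶠ m in atTop, ∀ b : ∀ i : Finset.range m, E i,
      μ.real (A ∩ (Finset.range m).restrict ⁻¹' {b}) ≤ ε * μ.real A := by
  rcases measureReal_nonneg.eq_or_lt' (a := μ.real A) with hA | hA
  · refine Eventually.of_forall fun m b => ?_
    rw [hA, mul_zero, ← hA]
    exact measureReal_mono inter_subset_left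
  · filter_upwards [Metric.tendstoUniformly_iff.1 (tendstoUniformly_measureReal_cylinder μ) _
      (mul_pos hε hA)] with m hm b
    rcases (A ∩ (Finset.range m).restrict ⁻¹' {b}).eq_empty_or_nonempty with h | ⟨x, -, rfl⟩
    · rw [h, measureReal_empty]
      positivity
    · have hx := (hm x).le
      rw [Pi.zero_apply, dist_zero_left, Real.norm_of_nonneg measureReal_nonneg,
        cylinder_eq_preimage_restrict] at hx
      exact (measureReal_mono inter_subset_right).trans hx

lemma isDivisible_prefixFiltration : IsDivisible μ (prefixFiltration E) := by
  intro n δ hδ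
  let X (m : ℕ) : (∀ i, E i) → ∀ i : Finset.range m, E i := (Finset.range m).restrict
  have hX (m : ℕ) : Measurable[prefixFiltration E m] (X m) := comap_measurable _
  have hX' (m : ℕ) : Measurable (X m) := Finset.measurable_restrict _
  have hsmall : ∀ᶠ m in atTop, ∀ c b,
      μ.real (X n ⁻¹' {c} ∩ X m ⁻¹' {b}) ≤ δ / 2 * μ.real (X n ⁻¹' {c}) :=
    eventually_all.2 fun c =>
      eventually_forall_measureReal_inter_preimage_restrict_le μ _ (half_pos hδ.1)
  obtain ⟨m, hnm, hm⟩ := ((eventually_ge_atTop n).and hsmall).exists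
  obtain ⟨S, hS⟩ := exists_forall_measureReal_inter_preimage_mem_Icc (hX' m) (hX' n) hδ.1.le hδ.2
    fun b c => hm c b
  refine ⟨m, hnm, {x | (X m x, X n x) ∈ S}, ?_, fun D hD => ?_⟩
  · have hpair : Measurable[prefixFiltration E m] fun x => (X m x, X n x) :=
      (hX m).prodMk ((hX n).mono ((prefixFiltration E).mono hnm) le_rfl)
    exact hpair S.toFinite.measurableSet
  · obtain ⟨T, -, rfl⟩ := measurableSet_prefixFiltration_iff.1 hD
    exact hS T

end SequenceSpace

section CantorSpace

lemma cyl_seg (ω : ℕ → Bool) (n : ℕ) : cyl (seg ω n) = PiNat.cylinder ω n := by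
  ext
  simp [cyl, seg, PiNat.cylinder]

lemma cyl_subset_cyl {x y : List Bool} (h : y <+: x) : cyl x ⊆ cyl y := fun ω hω i hi => by
  rw [hω i (hi.trans_le h.length_le), List.get_eq_getElem, List.get_eq_getElem, h.getElem hi]

/-- The strings of `P` none of whose proper prefixes lies in `P`: they form a prefix-free subset of
`P` whose cylinders have the same union. -/
def prefixMinimals (P : Set (List Bool)) : Set (List Bool) :=
  {x ∈ P | ∀ y ∈ P, y <+: x → y = x}

lemma prefixFree_prefixMinimals (P : Set (List Bool)) : PrefixFree (prefixMinimals P) :=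
  fun x hx _ hy => hy.2 x hx.1

lemma exists_prefix_mem_prefixMinimals {P : Set (List Bool)} {x : List Bool} (hx : x ∈ P) :
    ∃ y ∈ prefixMinimals P, y <+: x := by
  obtain ⟨y, ⟨hyP, hyx⟩, hmin⟩ := exists_minimalFor_of_wellFoundedLT
    (fun y => y ∈ P ∧ y <+: x) List.length ⟨x, hx, List.prefix_rfl⟩
  exact ⟨y, ⟨hyP, fun z hz hzy =>
    hzy.eq_of_length_le (hmin ⟨hz, hzy.trans hyx⟩ hzy.length_le)⟩, hyx⟩

lemma IsSemimeasureBound.measure_le_one {a : List Bool → ℝ} (ha : IsSemimeasureBound a)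
    (ν : Measure (ℕ → Bool)) {E : Set (ℕ → Bool)}
    (hE : ∀ ω ∈ E, ∃ l, ν (cyl (seg ω l)) ≤ ENNReal.ofReal (a (seg ω l))) : ν E ≤ 1 := by
  let S := prefixMinimals {x | ν (cyl x) ≤ ENNReal.ofReal (a x)}
  have hcover : E ⊆ ⋃ x ∈ S, cyl x := fun ω hω => by
    obtain ⟨l, hl⟩ := hE ω hω
    obtain ⟨y, hyS, hy⟩ : ∃ y ∈ S, y <+: seg ω l := exists_prefix_mem_prefixMinimals hl
    refine mem_biUnion hyS (cyl_subset_cyl hy ?_)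
    rw [cyl_seg]
    exact PiNat.self_mem_cylinder ω l
  calc ν E ≤ ν (⋃ x ∈ S, cyl x) := measure_mono hcover
    _ ≤ ∑' x : S, ν (cyl x) := measure_biUnion_le ν S.to_countable cyl
    _ ≤ ∑' x : S, ENNReal.ofReal (a x) := ENNReal.tsum_le_tsum fun x => x.2.1
    _ ≤ 1 := ha.2 S (prefixFree_prefixMinimals _)

lemma exists_mul_measureReal_le_of_lt_tFun {μ : Measure (ℕ → Bool)} [IsFiniteMeasure μ]
    {a : List Bool → ℝ} (ha : ∀ x, 0 ≤ a x) {ω : ℕ → Bool} {r : ℝ} (hr : 0 ≤ r)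
    (h : ENNReal.ofReal r < tFun μ a ω) :
    ∃ l, r * μ.real (cyl (seg ω l)) ≤ a (seg ω l) := by
  simp only [tFun, lt_iSup_iff] at h
  obtain ⟨l, -, hl⟩ := h
  have hmul := ENNReal.mul_le_of_le_div hl.le
  rw [← ofReal_measureReal, ← ENNReal.ofReal_mul hr] at hmul
  exact ⟨l, (ENNReal.ofReal_le_ofReal_iff (ha _)).1 hmul⟩

lemma IsSparse.exists_tFun_le {μ : Measure (ℕ → Bool)} [IsFiniteMeasure μ] {δ : ℕ → ℝ} {n : ℕ → ℕ}
    {B : ℕ → Set (ℕ → Bool)} (h : IsSparse μ (prefixFiltration fun _ => Bool) δ n B)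
    {a : List Bool → ℝ} (ha : IsSemimeasureBound a) {s : Finset ℕ} {w : ℕ → ℝ}
    (hw₀ : ∀ j ∈ s, 0 ≤ w j) (hw : MonotoneOn w s) (hsum : 1 < ∑ j ∈ s, w j * μ.real (B j)) :
    ∃ k ∈ s, ∃ ω ∈ B k, tFun μ a ω ≤ ENNReal.ofReal (w k + ∑ j ∈ s, w j * δ j) := by
  by_contra! hlt
  let ν := ∑ j ∈ s, ENNReal.ofReal (w j) • μ.restrict (B j)
  have hν {C : Set (ℕ → Bool)} (hC : MeasurableSet C) :
      ν C = ENNReal.ofReal (∑ j ∈ s, w j * μ.real (B j ∩ C)) :=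
    sum_ofReal_smul_restrict_apply μ hw₀ B hC
  have hν_le : ν (⋃ k ∈ s, B k) ≤ 1 := ha.measure_le_one ν fun ω hω => by
    obtain ⟨k, hk, hωk⟩ := mem_iUnion₂.1 hω
    have hnonneg : 0 ≤ w k + ∑ j ∈ s, w j * δ j :=
      add_nonneg (hw₀ k hk) (Finset.sum_nonneg fun j hj => mul_nonneg (hw₀ j hj) (h.nonneg j))
    obtain ⟨l, hl⟩ := exists_mul_measureReal_le_of_lt_tFun ha.1 hnonneg (hlt k hk ω hωk)
    refine ⟨l, ?_⟩
    rw [cyl_seg] at hl ⊢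
    rw [hν (measurableSet_cylinder ω l)]
    exact ENNReal.ofReal_le_ofReal <| hl.trans' <|
      h.sum_mul_measureReal_inter_le (measurableSet_prefixFiltration_cylinder ω l)
        (fun _ => cylinder_subset_of_measurableSet_of_not_disjoint)
        (not_disjoint_iff.2 ⟨ω, hωk, PiNat.self_mem_cylinder ω l⟩) hw₀ hw hk
  rw [hν (s.measurableSet_biUnion fun k _ => h.measurableSet k), ENNReal.ofReal_le_one] at hν_le
  refine hsum.not_ge (hν_le.trans' (Finset.sum_le_sum fun j hj => ?_))
  rw [inter_eq_left.2 (s.subset_set_biUnion_of_mem hj)]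

end CantorSpace

section Weights

lemma exists_finset_forall_le_sum_mem_Icc {f : ℕ → ℝ} {η t : ℝ} (hf₀ : ∀ j, 0 ≤ f j)
    (hη : ∀ j, f j ≤ η) (hf : ¬ Summable f) (ht : 0 ≤ t) (i : ℕ) :
    ∃ u : Finset ℕ, (∀ j ∈ u, i ≤ j) ∧ ∑ j ∈ u, f j ∈ Icc (t - η) t := by
  have htendsto : Tendsto (fun N => ∑ j ∈ Finset.range N, f (j + i)) atTop atTop :=
    (not_summable_iff_tendsto_nat_atTop_of_nonneg fun _ => hf₀ _).1
      (mt (summable_nat_add_iff i).1 hf)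
  obtain ⟨N, hN⟩ := (htendsto.eventually_ge_atTop t).exists
  obtain ⟨u, hu, hut⟩ := exists_subset_sum_mem_Icc ((Finset.range N).map (addRightEmbedding i))
    ((hf₀ 0).trans (hη 0)) (fun j _ => hη j) ht (by simpa using hN)
  refine ⟨u, fun j hj => ?_, hut⟩
  obtain ⟨m, -, rfl⟩ := Finset.mem_map.1 (hu hj)
  exact Nat.le_add_left i m

lemma tendsto_two_pow_div_atTop : Tendsto (fun k : ℕ => (2 : ℝ) ^ k / k) atTop atTop := by
  have h : Tendsto (fun k : ℕ => (k : ℝ) / 2 ^ k) atTop (𝓝[>] 0) := by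
    refine tendsto_nhdsWithin_iff.2
      ⟨by simpa using tendsto_pow_const_div_const_pow_of_one_lt 1 (one_lt_two (α := ℝ)), ?_⟩
    filter_upwards [eventually_gt_atTop 0] with k hk
    exact mem_Ioi.2 (by positivity)
  exact h.inv_tendsto_nhdsGT_zero.congr fun k => inv_div _ _

lemma monotoneOn_two_pow_div : MonotoneOn (fun k : ℕ => (2 : ℝ) ^ k / k) (Ici 1) := by
  intro i hi k _ hik
  induction k, hik using Nat.le_induction with
  | base => exact le_rfl
  | succ k hik ih =>
    have hk : (1 : ℝ) ≤ k := by exact_mod_cast (mem_Ici.1 hi).trans hik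
    refine (ih (hi.trans hik)).trans ?_
    rw [div_le_div_iff₀ (by positivity) (by positivity), pow_succ, mul_assoc, Nat.cast_succ]
    gcongr
    linarith

lemma exists_finset_sum_one_div_mem_Icc {M : ℝ} (hM : 0 ≤ M) :
    ∃ s : Finset ℕ, (∀ j ∈ s, 2 ≤ j ∧ M ≤ 2 ^ j / j) ∧
      ∑ j ∈ s, 1 / (j : ℝ) ∈ Icc (M - 1) M := by
  obtain ⟨i, hi⟩ := eventually_atTop.1
    ((eventually_ge_atTop 2).and (tendsto_two_pow_div_atTop.eventually_ge_atTop M))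
  obtain ⟨s, his, hs⟩ := exists_finset_forall_le_sum_mem_Icc (f := fun j : ℕ => 1 / (j : ℝ))
    (fun j => by positivity) (fun j => one_div (j : ℝ) ▸ Nat.cast_inv_le_one j)
    Real.not_summable_one_div_natCast hM i
  exact ⟨s, fun j hj => hi j (his j hj), hs⟩

lemma exists_weights_add_sum_lt {c : ℝ} (hc : 0 < c) :
    ∃ (s : Finset ℕ) (w : ℕ → ℝ), (∀ j ∈ s, 2 ≤ j) ∧ (∀ j ∈ s, 0 ≤ w j) ∧ MonotoneOn w s ∧
      1 < ∑ j ∈ s, w j * ((1 / 2) ^ (j + 2) / 4) ∧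
      ∀ k ∈ s, w k + ∑ j ∈ s, w j * (1 / 2) ^ (j + 2) < c * 2 ^ k / k := by
  obtain ⟨s, hs, hsum_ge, hsum_le⟩ :=
    exists_finset_sum_one_div_mem_Icc (M := 64 / c + 2) (by positivity)
  set H := ∑ j ∈ s, 1 / (j : ℝ)
  let w (j : ℕ) : ℝ := c / 4 * (2 ^ j / j)
  have hsum : ∑ j ∈ s, w j * (1 / 2) ^ (j + 2) = c / 16 * H := by
    rw [Finset.mul_sum]
    refine Finset.sum_congr rfl fun j _ => ?_
    simp only [w, pow_add, one_div_pow]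
    field_simp
    norm_num
  have hmono : MonotoneOn (fun k : ℕ => (2 : ℝ) ^ k / k) s :=
    monotoneOn_two_pow_div.mono fun j hj => one_le_two.trans (hs j hj).1
  refine ⟨s, w, fun j hj => (hs j hj).1, fun j _ => by positivity,
    (monotone_mul_left_of_nonneg (by positivity)).comp_monotoneOn hmono, ?_, fun k hk => ?_⟩
  · calc 1 < c / 64 * (64 / c + 1) := by field_simp; linarith
      _ ≤ c / 64 * H := by gcongr; linarith
      _ = ∑ j ∈ s, w j * ((1 / 2) ^ (j + 2) / 4) := by
          simp only [← mul_div_assoc, ← Finset.sum_div, hsum]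
          ring
  · have hk_le := (hs k hk).2
    have hk_pos : (0 : ℝ) < 2 ^ k / k := lt_of_lt_of_le (by positivity) hk_le
    calc w k + ∑ j ∈ s, w j * (1 / 2) ^ (j + 2)
        ≤ c / 4 * (2 ^ k / k) + c / 16 * (2 ^ k / k) := by
          rw [hsum]
          gcongr
          exact hsum_le.trans hk_le
      _ = 5 / 16 * (c * (2 ^ k / k)) := by ring
      _ < c * (2 ^ k / k) := mul_lt_of_lt_one_left (mul_pos hc hk_pos) (by norm_num)
      _ = c * 2 ^ k / k := (mul_div_assoc c _ _).symm

end Weights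

section DyadicStepFunction

variable {Ω : Type*} {mΩ : MeasurableSpace Ω}

lemma exists_measurable_eq_of_mem_of_pairwise_disjoint {ι β : Type*} [Countable ι] [Nonempty ι]
    [MeasurableSpace β] [Zero β] {B : ι → Set Ω} (hB : ∀ j, MeasurableSet (B j))
    (hdisj : Pairwise (Function.onFun Disjoint B)) (v : ι → β) :
    ∃ g : Ω → β, Measurable g ∧ (∀ j, ∀ ω ∈ B j, g ω = v j) ∧ ∀ ω ∉ ⋃ j, B j, g ω = 0 := by
  obtain ⟨f, hf, hfB⟩ := exists_measurable_piecewise B hB (fun j _ => v j)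
    (fun _ => measurable_const) fun i j hij ω hω => (disjoint_left.1 (hdisj hij) hω.1 hω.2).elim
  refine ⟨(⋃ j, B j).indicator f, hf.indicator (MeasurableSet.iUnion hB), fun j ω hω => ?_,
    fun ω hω => indicator_of_notMem hω f⟩
  rw [indicator_of_mem (mem_iUnion_of_mem j hω), hfB j hω]

variable {B : ℕ → Set Ω} {μ : Measure Ω} [IsProbabilityMeasure μ]

lemma measure_lt_le_ofReal_one_div (hB : ∀ j, μ.real (B j) ≤ (1 / 2) ^ (j + 1)) {g : Ω → ℝ}
    (hgB : ∀ j, ∀ ω ∈ B j, g ω = 2 ^ j) (hg : ∀ ω ∉ ⋃ j, B j, g ω = 0) {C : ℝ} (hC : 0 < C) :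
    μ {ω | C < g ω} ≤ ENNReal.ofReal (1 / C) := by
  rcases lt_or_ge C 1 with hC₁ | hC₁
  · exact prob_le_one.trans (ENNReal.one_le_ofReal.2 ((one_lt_one_div hC hC₁).le))
  obtain ⟨k, hkC, hCk⟩ := exists_nat_pow_near hC₁ (one_lt_two (α := ℝ))
  have hsub : {ω | C < g ω} ⊆ ⋃ i, B (k + 1 + i) := fun ω (hω : C < g ω) => by
    have hωB : ω ∈ ⋃ j, B j := by
      by_contra hωB
      exact hω.not_gt (hg ω hωB ▸ hC)
    obtain ⟨j, hj⟩ := mem_iUnion.1 hωB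
    rw [hgB j ω hj] at hω
    have hkj : k < j := (pow_lt_pow_iff_right₀ one_lt_two).1 (hkC.trans_lt hω)
    exact mem_iUnion.2 ⟨j - (k + 1), by rwa [Nat.add_sub_cancel' hkj]⟩
  have htail := hasSum_geometric_two' ((1 / 2 : ℝ) ^ (k + 1))
  calc μ {ω | C < g ω} ≤ ∑' i, μ (B (k + 1 + i)) :=
        (measure_mono hsub).trans (measure_iUnion_le _)
    _ ≤ ∑' i, ENNReal.ofReal ((1 / 2) ^ (k + 1) / 2 / 2 ^ i) := by
        refine ENNReal.tsum_le_tsum fun i => ?_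
        rw [← ofReal_measureReal]
        refine ENNReal.ofReal_le_ofReal ((hB _).trans_eq ?_)
        rw [pow_succ, pow_add _ (k + 1), one_div_pow _ i]
        ring
    _ = ENNReal.ofReal ((1 / 2) ^ (k + 1)) := by
        rw [← ENNReal.ofReal_tsum_of_nonneg (fun _ => by positivity) htail.summable, htail.tsum_eq]
    _ ≤ ENNReal.ofReal (1 / C) := by
        rw [one_div_pow]
        exact ENNReal.ofReal_le_ofReal (one_div_le_one_div_of_le hC hCk.le)

lemma exists_measurable_measure_lt_le_eq_two_pow (hBm : ∀ j, MeasurableSet (B j))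
    (hdisj : Pairwise (Function.onFun Disjoint B)) (hB : ∀ j, μ.real (B j) ≤ (1 / 2) ^ (j + 1)) :
    ∃ g : Ω → ℝ, Measurable g ∧ (∀ ω, 0 ≤ g ω) ∧
      (∀ C : ℝ, 0 < C → μ {ω | C < g ω} ≤ ENNReal.ofReal (1 / C)) ∧
      ∀ j, ∀ ω ∈ B j, g ω = 2 ^ j := by
  obtain ⟨g, hg, hgB, hg₀⟩ :=
    exists_measurable_eq_of_mem_of_pairwise_disjoint hBm hdisj fun j => (2 : ℝ) ^ j
  refine ⟨g, hg, fun ω => ?_, fun C => measure_lt_le_ofReal_one_div hB hgB hg₀, hgB⟩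
  by_cases hω : ω ∈ ⋃ j, B j
  · obtain ⟨j, hj⟩ := mem_iUnion.1 hω
    rw [hgB j ω hj]
    positivity
  · exact (hg₀ ω hω).ge

end DyadicStepFunction

/-- measure-theoretic core of Theorem 2. For a non-atomic Borel
probability measure `μ` on the Cantor space there is a measurable nonnegative
probability bounded function `g` such that for every semimeasure bound `a` and every
`c > 0` there is an `ω` with `g(ω) > 2` and
`sup_n a(ω|n)/μ([ω|n]) < c · g(ω) / log₂ g(ω)`. -/
theorem stmt14 (μ : Measure (ℕ → Bool)) [IsProbabilityMeasure μ]
    (hna : ∀ ω : ℕ → Bool, μ {ω} = 0) :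
    ∃ g : (ℕ → Bool) → ℝ, Measurable g ∧ (∀ ω, 0 ≤ g ω) ∧
      (∀ C : ℝ, 0 < C → μ {ω | C < g ω} ≤ ENNReal.ofReal (1 / C)) ∧
      ∀ a : List Bool → ℝ, IsSemimeasureBound a → ∀ c : ℝ, 0 < c →
        ∃ ω : ℕ → Bool, 2 < g ω ∧
          tFun μ a ω < ENNReal.ofReal (c * g ω / Real.logb 2 (g ω)) := by
  have : NullSingletonClass μ := ⟨hna⟩
  have hsum (j : ℕ) : ∑ i ∈ Finset.range j, (1 / 2 : ℝ) ^ (i + 2) ≤ 1 / 2 := by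
    simp only [pow_add, ← Finset.sum_mul]
    linarith [sum_geometric_two_le j]
  obtain ⟨n, B, hB, hB_low⟩ := (isDivisible_prefixFiltration μ).exists_isSparse
    (δ := fun j => (1 / 2) ^ (j + 2)) (fun j => by positivity) hsum
  obtain ⟨g, hg, hg₀, hg_bound, hgB⟩ := exists_measurable_measure_lt_le_eq_two_pow hB.measurableSet
    hB.disjoint fun j => (hB.measureReal_le j).trans
      (pow_le_pow_of_le_one (by norm_num) (by norm_num) (by lia))
  refine ⟨g, hg, hg₀, hg_bound, fun a ha c hc => ?_⟩
  obtain ⟨s, w, hs₂, hw₀, hw, hw_sum, hw_lt⟩ := exists_weights_add_sum_lt hc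
  obtain ⟨k, hk, ω, hω, hle⟩ := hB.exists_tFun_le ha hw₀ hw <| hw_sum.trans_le <|
    Finset.sum_le_sum fun j hj => mul_le_mul_of_nonneg_left (hB_low j) (hw₀ j hj)
  refine ⟨ω, ?_, hle.trans_lt ?_⟩
  · rw [hgB k ω hω]
    exact lt_self_pow₀ one_lt_two (hs₂ k hk)
  · have hk_lt := hw_lt k hk
    rw [hgB k ω hω, Real.logb_pow, Real.logb_self_eq_one one_lt_two, mul_one]
    refine (ENNReal.ofReal_lt_ofReal_iff ?_).2 hk_lt
    have hk_pos : (0 : ℝ) < k := by exact_mod_cast two_pos.trans_le (hs₂ k hk)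
    positivity
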